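/- Let n ≥ 1 and let X : M_n(ℂ) → M_n(ℂ) be a ℂ-linear map. Then tr(adj(M) · X(M)) = 0 for every M ∈ M_n(ℂ) — equivalently, the directional derivative d/dt det(M + t·X(M))|_{t=0} vanishes for every M, i.e., X belongs to the Lie algebra of the symmetry group of the determinant polynomial det_n — if and only if there exist matrices C, D ∈ M_n(ℂ) with tr(C) + tr(D) = 0 such that X(M) = C·M + M·D for all M ∈ M_n(ℂ). -/

import Mathlib

/-!
Matrices with a vanishing row `k` and a vanishing column `l` have an adjugate supported at the
entry `(l, k)`. Testing `tr (adj M * X M) = 0` on such matrices of corank one shows that `X E_ij`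
is supported on row `i` and column `j`. The condition is invariant under
`X ↦ P⁻¹ * X (P * · * Q) * Q⁻¹`, so the same holds in every pair of bases; comparing bases that
differ by a transvection shows that the entries of `X E_ij` off row `i` in column `j` do not depend
on `j`, those off column `j` in row `i` do not depend on `i`, and the entry at `(i, j)` is a
function of `i` plus a function of `j`. Such are exactly the maps `M ↦ C * M + M * D`. No division
occurs, so the argument works over every commutative ring.
-/

section DeterminantAnnihilator

open Matrix

variable {ι R : Type*} [Fintype ι] [DecidableEq ι] [CommRing R]

theorem trace_adjugate_mul_add (M C D : Matrix ι ι R) :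
    (M.adjugate * (C * M + M * D)).trace = M.det * (C.trace + D.trace) := by
  have hleft : (M.adjugate * (C * M)).trace = M.det * C.trace := by
    rw [trace_mul_comm, Matrix.mul_assoc, mul_adjugate, Matrix.mul_smul, Matrix.mul_one,
      trace_smul, smul_eq_mul]
  have hright : (M.adjugate * (M * D)).trace = M.det * D.trace := by
    rw [← Matrix.mul_assoc, adjugate_mul, Matrix.smul_mul, Matrix.one_mul, trace_smul,
      smul_eq_mul]
  rw [Matrix.mul_add, trace_add, hleft, hright, mul_add]

theorem adjugate_eq_single_of_row_col_eq_zero {M : Matrix ι ι R} {k l : ι}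
    (hrow : ∀ q, M k q = 0) (hcol : ∀ p, M p l = 0) :
    M.adjugate = single l k (M + single k l 1).det := by
  ext a b
  rw [adjugate_apply]
  rcases eq_or_ne b k with rfl | hb
  · rcases eq_or_ne a l with rfl | ha
    · rw [single_apply_same]
      congr 1
      ext p q
      rcases eq_or_ne p b with rfl | hp
      · simp [hrow, single_apply, Pi.single_apply, eq_comm]
      · simp [hp, hp.symm]
    · rw [single_apply_of_row_ne ha.symm]
      refine det_eq_zero_of_column_eq_zero l fun p => ?_
      simp [updateRow_apply, hcol, ha.symm]
  · rw [single_apply_of_col_ne _ _ hb.symm]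
    refine det_eq_zero_of_row_eq_zero k fun q => ?_
    simp [updateRow_apply, hb.symm, hrow]

theorem single_mul_permMatrix (i j : ι) (c : R) (σ : Equiv.Perm ι) :
    single i j c * σ.permMatrix R = single i (σ j) c := by
  rw [Equiv.Perm.permMatrix, PEquiv.mul_toMatrix_toPEquiv]
  ext p q
  simp [single_apply, Equiv.eq_symm_apply]

theorem single_mul_transvection (i j l : ι) (a c : R) :
    single i j a * transvection j l c = single i j a + single i l (a * c) := by
  simp [transvection, Matrix.mul_add]

theorem transvection_mul_single (k i j : ι) (a c : R) :
    transvection k i c * single i j a = single i j a + single k j (c * a) := by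
  simp [transvection, Matrix.add_mul]

/-- The linear vector field `M ↦ X M` annihilates the determinant, i.e. `X` lies in the Lie algebra
of its symmetry group. The directional derivative is written with the adjugate and is required to
vanish at every matrix over `R`, for finite `R` a priori less than vanishing as a polynomial. -/
def AnnihilatesDet (X : Module.End R (Matrix ι ι R)) : Prop :=
  ∀ M, (M.adjugate * X M).trace = 0

/-- The conjugate of `X` by the automorphism `M ↦ P * M * Q` of the space of matrices, which
expresses `X` in another pair of bases. -/
def conjMulLeftRight (P Q : (Matrix ι ι R)ˣ) (X : Module.End R (Matrix ι ι R)) :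
    Module.End R (Matrix ι ι R) :=
  LinearMap.mulLeftRight R (↑P⁻¹, ↑Q⁻¹) ∘ₗ X ∘ₗ LinearMap.mulLeftRight R (↑P, ↑Q)

theorem conjMulLeftRight_apply (P Q : (Matrix ι ι R)ˣ) (X : Module.End R (Matrix ι ι R))
    (M : Matrix ι ι R) :
    conjMulLeftRight P Q X M = (↑P⁻¹ : Matrix ι ι R) * X (P * M * Q) * (↑Q⁻¹ : Matrix ι ι R) :=
  rfl

/-- The transvection `1 + c E_ij` as a unit of the matrix ring. -/
def transvectionUnit {i j : ι} (hij : i ≠ j) (c : R) : (Matrix ι ι R)ˣ where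
  val := transvection i j c
  inv := transvection i j (-c)
  val_inv := by rw [transvection_mul_transvection_same _ _ hij, add_neg_cancel, transvection_zero]
  inv_val := by rw [transvection_mul_transvection_same _ _ hij, neg_add_cancel, transvection_zero]

theorem val_transvectionUnit {i j : ι} (hij : i ≠ j) (c : R) :
    (transvectionUnit hij c : Matrix ι ι R) = transvection i j c :=
  rfl

theorem val_inv_transvectionUnit {i j : ι} (hij : i ≠ j) (c : R) :
    (↑(transvectionUnit hij c)⁻¹ : Matrix ι ι R) = transvection i j (-c) :=
  rfl

namespace AnnihilatesDet

variable {X : Module.End R (Matrix ι ι R)}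

theorem conj (hX : AnnihilatesDet X) (P Q : (Matrix ι ι R)ˣ) :
    AnnihilatesDet (conjMulLeftRight P Q X) := by
  intro M
  set P' : Matrix ι ι R := ↑P⁻¹ with hP'
  set Q' : Matrix ι ι R := ↑Q⁻¹ with hQ'
  set N : Matrix ι ι R := P * M * Q with hN
  have hM : M = P' * N * Q' := by
    rw [hN, hP', hQ', Matrix.mul_assoc, Matrix.mul_assoc, Q.mul_inv, Matrix.mul_one,
      P.inv_mul_cancel_left]
  calc (M.adjugate * conjMulLeftRight P Q X M).trace
      = (Q'.adjugate * (N.adjugate * (P'.adjugate * P') * X N) * Q').trace := by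
        rw [conjMulLeftRight_apply, ← hP', ← hQ', ← hN, hM, adjugate_mul_distrib,
          adjugate_mul_distrib]
        simp only [Matrix.mul_assoc]
    _ = P'.det * Q'.det * (N.adjugate * X N).trace := by
        rw [trace_mul_comm, ← Matrix.mul_assoc, mul_adjugate, adjugate_mul]
        simp only [Matrix.smul_mul, Matrix.mul_smul, Matrix.one_mul, Matrix.mul_one, trace_smul,
          smul_eq_mul]
        ring
    _ = 0 := by rw [hX N, mul_zero]

theorem apply_eq_zero_of_row_col_eq_zero (hX : AnnihilatesDet X) {M : Matrix ι ι R} {k l : ι}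
    (hrow : ∀ q, M k q = 0) (hcol : ∀ p, M p l = 0) (hdet : IsUnit (M + single k l 1).det) :
    X M k l = 0 := by
  have htr := hX M
  rwa [adjugate_eq_single_of_row_col_eq_zero hrow hcol, trace_single_mul, smul_eq_mul,
    hdet.mul_right_eq_zero] at htr

theorem apply_one_sub_single_eq_zero (hX : AnnihilatesDet X) (k : ι) :
    X (1 - single k k 1) k k = 0 :=
  hX.apply_eq_zero_of_row_col_eq_zero (by simp [single_apply, one_apply])
    (by simp [single_apply, one_apply, eq_comm]) (by simp)

theorem apply_single_diag_eq_zero_of_ne (hX : AnnihilatesDet X) {i m k : ι}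
    (him : i ≠ m) (hki : k ≠ i) (hkm : k ≠ m) : X (single i m 1) k k = 0 := by
  have hsum : X (1 - single k k 1 + single i m 1) k k = 0 := by
    refine hX.apply_eq_zero_of_row_col_eq_zero ?_ ?_ ?_
    · simp [single_apply, one_apply, hki.symm]
    · simp [single_apply, one_apply, hkm.symm, eq_comm]
    · have htransvection :
          1 - single k k 1 + single i m 1 + single k k 1 = transvection i m (1 : R) := by
        rw [transvection]
        abel
      rw [htransvection, det_transvection_of_ne i m him]
      exact isUnit_one
  rwa [map_add, Matrix.add_apply, hX.apply_one_sub_single_eq_zero, zero_add] at hsum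

/-- Without a third index the witness is `i` itself, as then `E_ii = 1 - E_kk`. -/
theorem exists_forall_apply_single_diag_eq_zero {i k : ι} (hki : k ≠ i) :
    ∃ m ≠ k, ∀ {X : Module.End R (Matrix ι ι R)}, AnnihilatesDet X →
      X (single i m 1) k k = 0 := by
  by_cases hthird : ∃ m, m ≠ k ∧ m ≠ i
  · obtain ⟨m, hmk, hmi⟩ := hthird
    exact ⟨m, hmk, fun hX => hX.apply_single_diag_eq_zero_of_ne hmi.symm hki hmk.symm⟩
  · push Not at hthird
    have hE : single i i (1 : R) = 1 - single k k 1 := by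
      ext p q
      by_cases hp : p = k
      · subst hp
        simp [single_apply, one_apply, hki.symm]
      · obtain rfl := hthird p hp
        simp [single_apply, one_apply, hki]
    exact ⟨i, hki.symm, fun hX => hE ▸ hX.apply_one_sub_single_eq_zero k⟩

theorem apply_single_eq_zero (hX : AnnihilatesDet X) {i j k l : ι} (hki : k ≠ i) (hlj : l ≠ j) :
    X (single i j 1) k l = 0 := by
  obtain ⟨m, hmk, hm⟩ := exists_forall_apply_single_diag_eq_zero (R := R) hki
  obtain ⟨σ, rfl, rfl⟩ : ∃ σ : Equiv.Perm ι, σ m = j ∧ σ k = l :=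
    MulAction.is_two_pretransitive_iff.mp
      (Equiv.Perm.isMultiplyPretransitive ι 2) hmk hlj.symm
  have h := hm (hX.conj 1 (permMatrixHom.toHomUnits σ⁻¹))
  simp only [conjMulLeftRight_apply, ← map_inv, MonoidHom.coe_toHomUnits, permMatrixHom_apply,
    Units.val_one, Matrix.one_mul, inv_one, inv_inv, single_mul_permMatrix] at h
  rwa [Equiv.Perm.permMatrix, PEquiv.mul_toMatrix_toPEquiv] at h

theorem apply_single_col_eq (hX : AnnihilatesDet X) {i k : ι} (hki : k ≠ i) (j l : ι) :
    X (single i j 1) k j = X (single i l 1) k l := by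
  rcases eq_or_ne l j with rfl | hlj
  · rfl
  have h := (hX.conj 1 (transvectionUnit hlj.symm 1)).apply_single_eq_zero hki hlj
  simp only [conjMulLeftRight_apply, val_transvectionUnit, val_inv_transvectionUnit, inv_one,
    Units.val_one, Matrix.one_mul, single_mul_transvection, mul_one, mul_transvection_apply_same,
    map_add, Matrix.add_apply, hX.apply_single_eq_zero hki hlj,
    hX.apply_single_eq_zero hki hlj.symm] at h
  linear_combination -h

theorem apply_single_row_eq (hX : AnnihilatesDet X) {j l : ι} (hlj : l ≠ j) (i k : ι) :
    X (single i j 1) i l = X (single k j 1) k l := by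
  rcases eq_or_ne k i with rfl | hki
  · rfl
  have h := (hX.conj (transvectionUnit hki 1) 1).apply_single_eq_zero hki hlj
  simp only [conjMulLeftRight_apply, val_transvectionUnit, val_inv_transvectionUnit, inv_one,
    Units.val_one, transvection_mul_single, mul_one, transvection_mul_apply_same,
    map_add, Matrix.add_apply, hX.apply_single_eq_zero hki hlj,
    hX.apply_single_eq_zero hki.symm hlj] at h
  linear_combination -h

theorem apply_single_self_exchange (hX : AnnihilatesDet X) (i j k l : ι) :
    X (single i j 1) i j + X (single k l 1) k l = X (single i l 1) i l + X (single k j 1) k j := by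
  rcases eq_or_ne k i with rfl | hki
  · exact add_comm _ _
  have h := (hX.conj (transvectionUnit hki 1) 1).apply_single_col_eq hki j l
  simp only [conjMulLeftRight_apply, val_transvectionUnit, val_inv_transvectionUnit, inv_one,
    Units.val_one, transvection_mul_single, mul_one, transvection_mul_apply_same,
    map_add, Matrix.add_apply] at h
  linear_combination hX.apply_single_col_eq hki j l + hX.apply_single_col_eq hki.symm l j - h

theorem exists_eq_mul_add_mul (hX : AnnihilatesDet X) :
    ∃ C D : Matrix ι ι R, ∀ M, X M = C * M + M * D := by
  rcases isEmpty_or_nonempty ι with _ | ⟨⟨z⟩⟩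
  · exact ⟨0, 0, fun M => Subsingleton.elim _ _⟩
  let C : Matrix ι ι R := of fun p i => X (single i z 1) p z
  let D : Matrix ι ι R := of (fun j q => X (single z j 1) z q) - scalar ι (X (single z z 1) z z)
  suffices hlin : X = LinearMap.mulLeft R C + LinearMap.mulRight R D from
    ⟨C, D, fun M => LinearMap.congr_fun hlin M⟩
  refine Matrix.ext_linearMap _ fun i j => LinearMap.ext_ring ?_
  ext p q
  simp only [LinearMap.comp_apply, LinearMap.add_apply, LinearMap.mulLeft_apply,
    LinearMap.mulRight_apply, singleLinearMap_apply, Matrix.add_apply]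
  rcases eq_or_ne p i with rfl | hp <;> rcases eq_or_ne q j with rfl | hq
  · simp only [mul_single_apply_same, of_apply, mul_one, scalar_apply, single_mul_apply_same,
      Matrix.sub_apply, diagonal_apply_eq, one_mul, C, D]
    linear_combination hX.apply_single_self_exchange p q z z
  · simpa [C, D, hq, hq.symm] using hX.apply_single_row_eq hq p z
  · simpa [C, D, hp] using hX.apply_single_col_eq hp q z
  · simpa [hp, hq] using hX.apply_single_eq_zero hp hq

end AnnihilatesDet

theorem stmt_10_general (X : Module.End R (Matrix ι ι R)) :
    (∀ M : Matrix ι ι R, (M.adjugate * X M).trace = 0) ↔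
      ∃ C D : Matrix ι ι R, C.trace + D.trace = 0 ∧ ∀ M : Matrix ι ι R, X M = C * M + M * D := by
  constructor
  · intro hX
    obtain ⟨C, D, hCD⟩ := AnnihilatesDet.exists_eq_mul_add_mul hX
    have htr := hX 1
    rw [hCD, trace_adjugate_mul_add, det_one, one_mul] at htr
    exact ⟨C, D, htr, hCD⟩
  · rintro ⟨C, D, htr, hCD⟩ M
    rw [hCD, trace_adjugate_mul_add, htr, mul_zero]

end DeterminantAnnihilator

/-- A linear map `X : M_n(ℂ) → M_n(ℂ)` lies in the Lie algebra of the
symmetry group of the determinant — i.e. `tr(adj(M) · X(M)) = 0` for all `M`, which is the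
vanishing of the directional derivative `d/dt det(M + t·X(M))|_{t=0}` — iff
`X(M) = C·M + M·D` for some fixed matrices `C, D` with `tr C + tr D = 0`. -/
theorem stmt_10 (n : ℕ) (hn : 1 ≤ n)
    (X : Matrix (Fin n) (Fin n) ℂ →ₗ[ℂ] Matrix (Fin n) (Fin n) ℂ) :
    (∀ M : Matrix (Fin n) (Fin n) ℂ, (M.adjugate * X M).trace = 0) ↔
      ∃ C D : Matrix (Fin n) (Fin n) ℂ, C.trace + D.trace = 0 ∧
        ∀ M : Matrix (Fin n) (Fin n) ℂ, X M = C * M + M * D :=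
  stmt_10_general X
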